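/- arXiv:1010.3010 — 2 statements merged into one kernel-verified Lean document; each statement's English description precedes it below -/
import Mathlib

section
/- Let ψ : ℝ³ → ℝ be smooth and ε ∈ ℝ. Define ψ̃(t,x,y) := ψ(t, X, Y) + (ε/2)(x² + y²), where X := x cos(εt) + y sin(εt) and Y := −x sin(εt) + y cos(εt). Then for all (t,x,y): (i) x ψ̃_y(t,x,y) − y ψ̃_x(t,x,y) = (X ψ_y − Y ψ_x)(t,X,Y); (ii) (x²+y²)(ψ̃_xx + ψ̃_yy)(t,x,y) − 2(x ψ̃_x + y ψ̃_y)(t,x,y) = [(X²+Y²)(ψ_xx + ψ_yy) − 2(X ψ_x + Y ψ_y)](t,X,Y); (iii) (x²+y²)(x ψ̃_tx + y ψ̃_ty)(t,x,y) + (x ψ̃_x + y ψ̃_y)(t,x,y)·[xy(ψ̃_yy − ψ̃_xx) + (x² − y²)ψ̃_xy + x ψ̃_y − y ψ̃_x](t,x,y) equals the same expression built from ψ evaluated at (t,X,Y). -/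
/-!
Statement 17: the expressions x ψ_y − y ψ_x, r²(ψ_xx+ψ_yy) − 2(xψ_x+yψ_y) and
r²(xψ_tx+yψ_ty) + (xψ_x+yψ_y)(xy(ψ_yy−ψ_xx)+(x²−y²)ψ_xy+xψ_y−yψ_x) are differential
invariants of the one-parameter group generated by J^t = tx∂_y − ty∂_x + ½(x²+y²)∂_ψ.
-/

noncomputable section

/-- Partial derivative with respect to t. -/
def dT (f : ℝ × ℝ × ℝ → ℝ) (p : ℝ × ℝ × ℝ) : ℝ := fderiv ℝ f p (1, 0, 0)
/-- Partial derivative with respect to x. -/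
def dX (f : ℝ × ℝ × ℝ → ℝ) (p : ℝ × ℝ × ℝ) : ℝ := fderiv ℝ f p (0, 1, 0)
/-- Partial derivative with respect to y. -/
def dY (f : ℝ × ℝ × ℝ → ℝ) (p : ℝ × ℝ × ℝ) : ℝ := fderiv ℝ f p (0, 0, 1)

/-- The transformed point (t, X, Y) = (t, x cos(εt) + y sin(εt), −x sin(εt) + y cos(εt)). -/
def rotPt (ε : ℝ) (p : ℝ × ℝ × ℝ) : ℝ × ℝ × ℝ :=
  (p.1, p.2.1 * Real.cos (ε * p.1) + p.2.2 * Real.sin (ε * p.1),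
   -p.2.1 * Real.sin (ε * p.1) + p.2.2 * Real.cos (ε * p.1))

/-- First invariant: x ψ_y − y ψ_x. -/
def inv1 (ψ : ℝ × ℝ × ℝ → ℝ) (p : ℝ × ℝ × ℝ) : ℝ :=
  p.2.1 * dY ψ p - p.2.2 * dX ψ p

/-- Second invariant: (x²+y²)(ψ_xx + ψ_yy) − 2(x ψ_x + y ψ_y). -/
def inv2 (ψ : ℝ × ℝ × ℝ → ℝ) (p : ℝ × ℝ × ℝ) : ℝ :=
  (p.2.1 ^ 2 + p.2.2 ^ 2) * (dX (dX ψ) p + dY (dY ψ) p)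
    - 2 * (p.2.1 * dX ψ p + p.2.2 * dY ψ p)

/-- Third invariant:
(x²+y²)(x ψ_tx + y ψ_ty) + (x ψ_x + y ψ_y)·(xy(ψ_yy − ψ_xx) + (x² − y²)ψ_xy + x ψ_y − y ψ_x). -/
def inv3 (ψ : ℝ × ℝ × ℝ → ℝ) (p : ℝ × ℝ × ℝ) : ℝ :=
  (p.2.1 ^ 2 + p.2.2 ^ 2) * (p.2.1 * dX (dT ψ) p + p.2.2 * dY (dT ψ) p)
    + (p.2.1 * dX ψ p + p.2.2 * dY ψ p) *
      (p.2.1 * p.2.2 * (dY (dY ψ) p - dX (dX ψ) p)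
        + (p.2.1 ^ 2 - p.2.2 ^ 2) * dX (dY ψ) p
        + p.2.1 * dY ψ p - p.2.2 * dX ψ p)

lemma chain3 {g : ℝ × ℝ × ℝ → ℝ} (hg : Differentiable ℝ g) {a b c : ℝ → ℝ} {a' b' c' s : ℝ}
    (ha : HasDerivAt a a' s) (hb : HasDerivAt b b' s) (hc : HasDerivAt c c' s) :
    HasDerivAt (fun s => g (a s, b s, c s))
      (a' * dT g (a s, b s, c s) + b' * dX g (a s, b s, c s) + c' * dY g (a s, b s, c s)) s := by
  have h := (hg (a s, b s, c s)).hasFDerivAt.comp_hasDerivAt s (ha.prodMk (hb.prodMk hc))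
  refine h.congr_deriv ?_
  have e : ((a', b', c') : ℝ × ℝ × ℝ)
      = a' • (1, 0, 0) + b' • (0, 1, 0) + c' • (0, 0, 1) := by simp
  rw [e, map_add, map_add, map_smul, map_smul, map_smul]
  simp only [dT, dX, dY, smul_eq_mul]

lemma dT_eq {F : ℝ × ℝ × ℝ → ℝ} (hF : Differentiable ℝ F) {t x y d : ℝ}
    (h : HasDerivAt (fun s => F (s, x, y)) d t) : dT F (t, x, y) = d := by
  have := (chain3 hF (hasDerivAt_id t) (hasDerivAt_const t x) (hasDerivAt_const t y)).unique h
  simpa using this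

lemma dX_eq {F : ℝ × ℝ × ℝ → ℝ} (hF : Differentiable ℝ F) {t x y d : ℝ}
    (h : HasDerivAt (fun s => F (t, s, y)) d x) : dX F (t, x, y) = d := by
  have := (chain3 hF (hasDerivAt_const x t) (hasDerivAt_id x) (hasDerivAt_const x y)).unique h
  simpa using this

lemma dY_eq {F : ℝ × ℝ × ℝ → ℝ} (hF : Differentiable ℝ F) {t x y d : ℝ}
    (h : HasDerivAt (fun s => F (t, x, s)) d y) : dY F (t, x, y) = d := by
  have := (chain3 hF (hasDerivAt_const y t) (hasDerivAt_const y x) (hasDerivAt_id y)).unique h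
  simpa using this

lemma rot_diff (ε : ℝ) : Differentiable ℝ (rotPt ε) := by
  unfold rotPt; fun_prop

lemma rot_T {g : ℝ × ℝ × ℝ → ℝ} (hg : Differentiable ℝ g) (ε t x y : ℝ) :
    HasDerivAt (fun s => g (rotPt ε (s, x, y)))
      (dT g (rotPt ε (t, x, y)) + ε * ((rotPt ε (t, x, y)).2.2 * dX g (rotPt ε (t, x, y))
        - (rotPt ε (t, x, y)).2.1 * dY g (rotPt ε (t, x, y)))) t := by
  have hl : HasDerivAt (fun s : ℝ => ε * s) ε t := by simpa using (hasDerivAt_id t).const_mul ε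
  have h := chain3 hg (hasDerivAt_id t) ((hl.cos.const_mul x).add (hl.sin.const_mul y))
    ((hl.sin.const_mul (-x)).add (hl.cos.const_mul y))
  refine h.congr_deriv ?_
  simp only [rotPt, id, Pi.add_apply]
  ring

lemma rot_X {g : ℝ × ℝ × ℝ → ℝ} (hg : Differentiable ℝ g) (ε t x y : ℝ) :
    HasDerivAt (fun s => g (rotPt ε (t, s, y)))
      (Real.cos (ε * t) * dX g (rotPt ε (t, x, y))
        - Real.sin (ε * t) * dY g (rotPt ε (t, x, y))) x := by
  have h := chain3 hg (hasDerivAt_const x t)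
    (((hasDerivAt_id x).mul_const (Real.cos (ε * t))).add_const (y * Real.sin (ε * t)))
    (((hasDerivAt_id x).neg.mul_const (Real.sin (ε * t))).add_const (y * Real.cos (ε * t)))
  refine h.congr_deriv ?_
  simp only [rotPt, id, Pi.neg_apply]
  ring

lemma rot_Y {g : ℝ × ℝ × ℝ → ℝ} (hg : Differentiable ℝ g) (ε t x y : ℝ) :
    HasDerivAt (fun s => g (rotPt ε (t, x, s)))
      (Real.sin (ε * t) * dX g (rotPt ε (t, x, y))
        + Real.cos (ε * t) * dY g (rotPt ε (t, x, y))) y := by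
  have h := chain3 hg (hasDerivAt_const y t)
    (((hasDerivAt_id y).mul_const (Real.sin (ε * t))).const_add (x * Real.cos (ε * t)))
    (((hasDerivAt_id y).mul_const (Real.cos (ε * t))).const_add (-x * Real.sin (ε * t)))
  refine h.congr_deriv ?_
  simp only [rotPt, id]
  ring

lemma dir_diff {ψ : ℝ × ℝ × ℝ → ℝ} (hψ : ContDiff ℝ (⊤ : ℕ∞) ψ) (v : ℝ × ℝ × ℝ) :
    Differentiable ℝ (fun p => fderiv ℝ ψ p v) := by
  have h : ContDiff ℝ 1 (fderiv ℝ ψ) := hψ.fderiv_right (by norm_cast)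
  exact (h.differentiable (by norm_num)).clm_apply (differentiable_const v)

lemma dXY_comm {ψ : ℝ × ℝ × ℝ → ℝ} (hψ : ContDiff ℝ (⊤ : ℕ∞) ψ) (p : ℝ × ℝ × ℝ) :
    dY (dX ψ) p = dX (dY ψ) p := by
  have h : ContDiff ℝ 1 (fderiv ℝ ψ) := hψ.fderiv_right (by norm_cast)
  have hd := h.differentiable (by norm_num) p
  have hs : IsSymmSndFDerivAt ℝ ψ p :=
    hψ.contDiffAt.isSymmSndFDerivAt (by simp; norm_cast)
  have key : ∀ v w, fderiv ℝ (fun q => fderiv ℝ ψ q v) p w = fderiv ℝ (fderiv ℝ ψ) p w v := by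
    intro v w
    rw [fderiv_clm_apply hd (differentiableAt_const v)]
    simp
  change fderiv ℝ (fun q => fderiv ℝ ψ q (0, 1, 0)) p (0, 0, 1)
    = fderiv ℝ (fun q => fderiv ℝ ψ q (0, 0, 1)) p (0, 1, 0)
  rw [key, key]
  exact hs _ _

theorem differential_invariants_of_Jt
    (ψ : ℝ × ℝ × ℝ → ℝ) (hψ : ContDiff ℝ (⊤ : ℕ∞) ψ) (ε : ℝ) :
    ∀ p : ℝ × ℝ × ℝ,
      inv1 (fun q => ψ (rotPt ε q) + ε / 2 * (q.2.1 ^ 2 + q.2.2 ^ 2)) p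
        = inv1 ψ (rotPt ε p) ∧
      inv2 (fun q => ψ (rotPt ε q) + ε / 2 * (q.2.1 ^ 2 + q.2.2 ^ 2)) p
        = inv2 ψ (rotPt ε p) ∧
      inv3 (fun q => ψ (rotPt ε q) + ε / 2 * (q.2.1 ^ 2 + q.2.2 ^ 2)) p
        = inv3 ψ (rotPt ε p) := by
  rintro ⟨t, x, y⟩
  have hd : Differentiable ℝ ψ := hψ.differentiable (by simp)
  have hT : Differentiable ℝ (dT ψ) := dir_diff hψ _
  have hX : Differentiable ℝ (dX ψ) := dir_diff hψ _
  have hY : Differentiable ℝ (dY ψ) := dir_diff hψ _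
  have hR := rot_diff ε
  set F : ℝ × ℝ × ℝ → ℝ := fun q => ψ (rotPt ε q) + ε / 2 * (q.2.1 ^ 2 + q.2.2 ^ 2) with hFdef
  have hF : Differentiable ℝ F := by
    have := hd.comp hR
    simp only [Function.comp_def] at this
    fun_prop
  have hsq : ∀ s : ℝ, HasDerivAt (fun s : ℝ => s ^ 2) (2 * s) s := fun s => by
    simpa using hasDerivAt_pow 2 s
  have eT : dT F = fun q => dT ψ (rotPt ε q) + ε * ((rotPt ε q).2.2 * dX ψ (rotPt ε q)
        - (rotPt ε q).2.1 * dY ψ (rotPt ε q)) := by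
    funext ⟨t, x, y⟩
    exact dT_eq hF ((rot_T hd ε t x y).add_const (ε / 2 * (x ^ 2 + y ^ 2)))
  have eX : dX F = fun q => Real.cos (ε * q.1) * dX ψ (rotPt ε q)
        - Real.sin (ε * q.1) * dY ψ (rotPt ε q) + ε * q.2.1 := by
    funext ⟨t, x, y⟩
    refine dX_eq hF (((rot_X hd ε t x y).add
      (((hsq x).add_const (y ^ 2)).const_mul (ε / 2))).congr_deriv ?_)
    ring
  have eY : dY F = fun q => Real.sin (ε * q.1) * dX ψ (rotPt ε q)
        + Real.cos (ε * q.1) * dY ψ (rotPt ε q) + ε * q.2.2 := by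
    funext ⟨t, x, y⟩
    refine dY_eq hF (((rot_Y hd ε t x y).add
      (((hsq y).const_add (x ^ 2)).const_mul (ε / 2))).congr_deriv ?_)
    ring
  have cT := hT.comp hR
  have cX := hX.comp hR
  have cY := hY.comp hR
  simp only [Function.comp_def] at cT cX cY
  have hFT : Differentiable ℝ (dT F) := by rw [eT]; fun_prop
  have hFX : Differentiable ℝ (dX F) := by rw [eX]; fun_prop
  have hFY : Differentiable ℝ (dY F) := by rw [eY]; fun_prop
  have d1 : Differentiable ℝ (fun q : ℝ × ℝ × ℝ => q.2.1) := by fun_prop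
  have d2 : Differentiable ℝ (fun q : ℝ × ℝ × ℝ => q.2.2) := by fun_prop
  have p1X : ∀ q, dX (fun q : ℝ × ℝ × ℝ => q.2.1) q = 1 := fun ⟨t, x, y⟩ =>
    dX_eq d1 (hasDerivAt_id x)
  have p1Y : ∀ q, dY (fun q : ℝ × ℝ × ℝ => q.2.1) q = 0 := fun ⟨t, x, y⟩ =>
    dY_eq d1 (hasDerivAt_const y x)
  have p2X : ∀ q, dX (fun q : ℝ × ℝ × ℝ => q.2.2) q = 0 := fun ⟨t, x, y⟩ =>
    dX_eq d2 (hasDerivAt_const x y)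
  have p2Y : ∀ q, dY (fun q : ℝ × ℝ × ℝ => q.2.2) q = 1 := fun ⟨t, x, y⟩ =>
    dY_eq d2 (hasDerivAt_id y)
  have eXX := dX_eq (t := t) (x := x) (y := y) hFX (by
    rw [eX]
    exact (((rot_X hX ε t x y).const_mul (Real.cos (ε * t))).sub
      ((rot_X hY ε t x y).const_mul (Real.sin (ε * t)))).add ((hasDerivAt_id x).const_mul ε))
  have eXY := dX_eq (t := t) (x := x) (y := y) hFY (by
    rw [eY]
    exact (((rot_X hX ε t x y).const_mul (Real.sin (ε * t))).add
      ((rot_X hY ε t x y).const_mul (Real.cos (ε * t)))).add (hasDerivAt_const x (ε * y)))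
  have eYY := dY_eq (t := t) (x := x) (y := y) hFY (by
    rw [eY]
    exact (((rot_Y hX ε t x y).const_mul (Real.sin (ε * t))).add
      ((rot_Y hY ε t x y).const_mul (Real.cos (ε * t)))).add ((hasDerivAt_id y).const_mul ε))
  have eXT := dX_eq (t := t) (x := x) (y := y) hFT (by
    rw [eT]
    exact (rot_X hT ε t x y).add ((((rot_X d2 ε t x y).mul (rot_X hX ε t x y)).sub
      ((rot_X d1 ε t x y).mul (rot_X hY ε t x y))).const_mul ε))
  have eYT := dY_eq (t := t) (x := x) (y := y) hFT (by
    rw [eT]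
    exact (rot_Y hT ε t x y).add ((((rot_Y d2 ε t x y).mul (rot_Y hX ε t x y)).sub
      ((rot_Y d1 ε t x y).mul (rot_Y hY ε t x y))).const_mul ε))
  simp only [p1X, p1Y, p2X, p2Y, dXY_comm hψ] at eXX eXY eYY eXT eYT
  have e1 : (rotPt ε (t, x, y)).2.1 = x * Real.cos (ε * t) + y * Real.sin (ε * t) := rfl
  have e2 : (rotPt ε (t, x, y)).2.2 = -x * Real.sin (ε * t) + y * Real.cos (ε * t) := rfl
  have hcs := Real.sin_sq_add_cos_sq (ε * t)
  simp only [inv1, inv2, inv3, eXX, eXY, eYY, eXT, eYT]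
  simp only [eX, eY, e1, e2]
  clear eXX eXY eYY eXT eYT e1 e2
  generalize rotPt ε (t, x, y) = P
  generalize dX (dX ψ) P = a
  generalize dX (dY ψ) P = b
  generalize dY (dY ψ) P = d
  generalize dX (dT ψ) P = k
  generalize dY (dT ψ) P = l
  generalize dX ψ P = u
  generalize dY ψ P = v
  generalize Real.sin (ε * t) = s at *
  generalize Real.cos (ε * t) = c at *
  have hc2 : c ^ 2 = 1 - s ^ 2 := by linarith
  have hc3 : c ^ 3 = c * (1 - s ^ 2) := by rw [← hc2]; ring
  have hc4 : c ^ 4 = (1 - s ^ 2) ^ 2 := by rw [← hc2]; ring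
  have hc5 : c ^ 5 = c * (1 - s ^ 2) ^ 2 := by rw [← hc2]; ring
  refine ⟨?_, ?_, ?_⟩
  · ring
  · ring_nf
  · ring_nf
    simp only [hc2, hc3, hc4, hc5]
    ring
end
end

section
/- For a smooth function ψ : ℝ³ → ℝ define ζ := ψ_xx + ψ_yy, W(ψ) := (ζ_t + ψ_x ζ_y − ψ_y ζ_x)/((ψ_xx − ψ_yy)² + 4ψ_xy²), wherever the denominator is nonzero. Then W is invariant under each of the following transformations, i.e., W(ψ̃) at (t,x,y) equals W(ψ) at the corresponding source point: (a) ψ̃(t,x,y) = e^{−ε}ψ(e^{−ε}t,x,y); (b) ψ̃(t,x,y) = e^{2ε}ψ(t,e^{−ε}x,e^{−ε}y); (c) ψ̃(t,x,y) = ψ(t, x cos(θ+εt) + y sin(θ+εt), −x sin(θ+εt) + y cos(θ+εt)) + (ε/2)(x²+y²) for any θ, ε ∈ ℝ; (d) ψ̃(t,x,y) = ψ(t, x−γ¹(t), y−γ²(t)) − γ¹'(t)y + γ²'(t)x for any smooth γ¹, γ²; (e) ψ̃(t,x,y) = ψ(t,x,y) + χ(t) for any smooth χ. -/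
/-!
Statement 18: the differential function W(ψ) = (ζ_t + ψ_x ζ_y − ψ_y ζ_x)/((ψ_xx − ψ_yy)² + 4ψ_xy²)
is a differential invariant of the one-parameter symmetry groups generated by D₁, D₂, J + J^t
(rotations with time-dependent angle θ + εt), X(γ¹), Y(γ²) and Z(χ).
-/

noncomputable section

/-- The vorticity ζ := ψ_xx + ψ_yy. -/
def vort (ψ : ℝ × ℝ × ℝ → ℝ) : ℝ × ℝ × ℝ → ℝ := fun p => dX (dX ψ) p + dY (dY ψ) p

/-- The numerator ζ_t + ψ_x ζ_y − ψ_y ζ_x. -/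
def Wnum (ψ : ℝ × ℝ × ℝ → ℝ) (p : ℝ × ℝ × ℝ) : ℝ :=
  dT (vort ψ) p + dX ψ p * dY (vort ψ) p - dY ψ p * dX (vort ψ) p

/-- The denominator (ψ_xx − ψ_yy)² + 4 ψ_xy². -/
def Wden (ψ : ℝ × ℝ × ℝ → ℝ) (p : ℝ × ℝ × ℝ) : ℝ :=
  (dX (dX ψ) p - dY (dY ψ) p) ^ 2 + 4 * (dX (dY ψ) p) ^ 2

/-- W(ψ) = (ζ_t + ψ_x ζ_y − ψ_y ζ_x)/((ψ_xx − ψ_yy)² + 4ψ_xy²). -/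
def W (ψ : ℝ × ℝ × ℝ → ℝ) (p : ℝ × ℝ × ℝ) : ℝ := Wnum ψ p / Wden ψ p

theorem aux_smooth {f : ℝ × ℝ × ℝ → ℝ} (hf : ContDiff ℝ (⊤ : ℕ∞) f) (d : ℝ × ℝ × ℝ) :
    ContDiff ℝ (⊤ : ℕ∞) (fun p => fderiv ℝ f p d) :=
  (hf.fderiv_right (m := (⊤ : ℕ∞)) (by simp)).clm_apply contDiff_const

theorem aux_symm {f : ℝ × ℝ × ℝ → ℝ} (hf : ContDiff ℝ (⊤ : ℕ∞) f) (p : ℝ × ℝ × ℝ) :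
    dY (dX f) p = dX (dY f) p := by
  have h1 : DifferentiableAt ℝ (fderiv ℝ f) p :=
    ((hf.fderiv_right (m := (⊤ : ℕ∞)) (by simp)).differentiable (by simp)) p
  have hs : IsSymmSndFDerivAt ℝ f p := by
    apply hf.contDiffAt.isSymmSndFDerivAt
    simp only [minSmoothness_of_isRCLikeNormedField]
    exact WithTop.coe_le_coe.2 (le_top : (2 : ℕ∞) ≤ ⊤)
  have e : ∀ d d' : ℝ × ℝ × ℝ,
      fderiv ℝ (fun q => fderiv ℝ f q d) p d' = fderiv ℝ (fderiv ℝ f) p d' d := by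
    intro d d'
    rw [fderiv_clm_apply h1 (differentiableAt_const d)]
    simp
  have := hs.eq (0, 0, 1) (0, 1, 0)
  rw [← e, ← e] at this
  exact this

/-- Directional derivative as derivative along a line. -/
theorem aux_dir {f : ℝ × ℝ × ℝ → ℝ} {p d : ℝ × ℝ × ℝ} {f' : ℝ} (hf : DifferentiableAt ℝ f p)
    (h : HasDerivAt (fun r : ℝ => f (p.1 + r * d.1, p.2.1 + r * d.2.1, p.2.2 + r * d.2.2)) f' 0) :
    fderiv ℝ f p d = f' := by
  rw [← hf.lineDeriv_eq_fderiv]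
  exact HasDerivAt.deriv h

theorem aux_curve {f : ℝ × ℝ × ℝ → ℝ} (hf : Differentiable ℝ f) {u v w : ℝ → ℝ} {u' v' w' r : ℝ}
    (hu : HasDerivAt u u' r) (hv : HasDerivAt v v' r) (hw : HasDerivAt w w' r) :
    HasDerivAt (fun r => f (u r, v r, w r))
      (u' * dT f (u r, v r, w r) + v' * dX f (u r, v r, w r) + w' * dY f (u r, v r, w r)) r := by
  have h := (hf (u r, v r, w r)).hasFDerivAt.comp_hasDerivAt r (hu.prodMk (hv.prodMk hw))
  refine h.congr_deriv ?_
  have : ((u', v', w') : ℝ × ℝ × ℝ) = u' • (1, 0, 0) + v' • (0, 1, 0) + w' • (0, 0, 1) := by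
    simp
  rw [this]
  simp only [map_add, map_smul, smul_eq_mul, dT, dX, dY]

theorem aux_time {g : ℝ → ℝ} {g' t d : ℝ} (hg : HasDerivAt g g' t) :
    HasDerivAt (fun r : ℝ => g (t + r * d)) (g' * d) 0 := by
  have h1 : HasDerivAt (fun r : ℝ => t + r * d) d 0 := by
    simpa using ((hasDerivAt_id (0 : ℝ)).mul_const d).const_add t
  have h2 : HasDerivAt g g' (t + 0 * d) := by simpa using hg
  exact h2.comp (0 : ℝ) h1

theorem aux_lin (t d : ℝ) : HasDerivAt (fun r : ℝ => t + r * d) d 0 := by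
  simpa using ((hasDerivAt_id (0 : ℝ)).mul_const d).const_add t

/-- The general point transformation. -/
def Phi (a : ℝ) (c s u v : ℝ → ℝ) (q : ℝ × ℝ × ℝ) : ℝ × ℝ × ℝ :=
  (a * q.1, c q.1 * q.2.1 + s q.1 * q.2.2 - u q.1, -s q.1 * q.2.1 + c q.1 * q.2.2 - v q.1)

section
variable {a e : ℝ} {c s u v u' v' : ℝ → ℝ}
  (hc : ∀ t, HasDerivAt c (-e * s t) t) (hs : ∀ t, HasDerivAt s (e * c t) t)
  (hu : ∀ t, HasDerivAt u (u' t) t) (hv : ∀ t, HasDerivAt v (v' t) t)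

include hc hs hu hv

theorem Phi_diff : Differentiable ℝ (Phi a c s u v) := by
  have h1 : Differentiable ℝ c := fun t => (hc t).differentiableAt
  have h2 : Differentiable ℝ s := fun t => (hs t).differentiableAt
  have h3 : Differentiable ℝ u := fun t => (hu t).differentiableAt
  have h4 : Differentiable ℝ v := fun t => (hv t).differentiableAt
  unfold Phi
  fun_prop

theorem Phi_curve {f : ℝ × ℝ × ℝ → ℝ} (hf : Differentiable ℝ f) (p d : ℝ × ℝ × ℝ) :
    HasDerivAt (fun r : ℝ => f (Phi a c s u v
        (p.1 + r * d.1, p.2.1 + r * d.2.1, p.2.2 + r * d.2.2)))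
      (a * d.1 * dT f (Phi a c s u v p)
        + ((-e * s p.1 * p.2.1 + e * c p.1 * p.2.2 - u' p.1) * d.1 + c p.1 * d.2.1 + s p.1 * d.2.2)
          * dX f (Phi a c s u v p)
        + ((-e * c p.1 * p.2.1 - e * s p.1 * p.2.2 - v' p.1) * d.1 - s p.1 * d.2.1 + c p.1 * d.2.2)
          * dY f (Phi a c s u v p)) 0 := by
  have Hc := aux_time (d := d.1) (hc p.1)
  have Hs := aux_time (d := d.1) (hs p.1)
  have Hu := aux_time (d := d.1) (hu p.1)
  have Hv := aux_time (d := d.1) (hv p.1)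
  have X := aux_lin p.2.1 d.2.1
  have Y := aux_lin p.2.2 d.2.2
  have h := aux_curve hf ((aux_lin p.1 d.1).const_mul a) (((Hc.mul X).add (Hs.mul Y)).sub Hu)
    (((Hs.neg.mul X).add (Hc.mul Y)).sub Hv)
  refine h.congr_deriv ?_
  simp only [Pi.add_apply, Pi.sub_apply, Pi.mul_apply, Pi.neg_apply, zero_mul, add_zero, Phi]
  ring

theorem W_general {ψ : ℝ × ℝ × ℝ → ℝ} (hψ : ContDiff ℝ (⊤ : ℕ∞) ψ) {k b : ℝ} {α β χ : ℝ → ℝ}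
    (hα : Differentiable ℝ α) (hβ : Differentiable ℝ β) (hχ : Differentiable ℝ χ)
    (hb : ∀ t, c t ^ 2 + s t ^ 2 = b) (ha : a = k * b) (ha0 : a ≠ 0)
    (hu' : ∀ t, u' t = α t * s t + β t * c t) (hv' : ∀ t, v' t = α t * c t - β t * s t)
    (p : ℝ × ℝ × ℝ) :
    W (fun q => k * ψ (Phi a c s u v q) + (e / 2 * (q.2.1 ^ 2 + q.2.2 ^ 2)
      + α q.1 * q.2.1 - β q.1 * q.2.2 + χ q.1)) p = W ψ (Phi a c s u v p) := by
  have h1 : Differentiable ℝ c := fun t => (hc t).differentiableAt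
  have h2 : Differentiable ℝ s := fun t => (hs t).differentiableAt
  have hP : Differentiable ℝ (Phi a c s u v) := Phi_diff hc hs hu hv
  have sX : ContDiff ℝ (⊤ : ℕ∞) (dX ψ) := aux_smooth hψ _
  have sY : ContDiff ℝ (⊤ : ℕ∞) (dY ψ) := aux_smooth hψ _
  have sXX : ContDiff ℝ (⊤ : ℕ∞) (dX (dX ψ)) := aux_smooth sX _
  have sYY : ContDiff ℝ (⊤ : ℕ∞) (dY (dY ψ)) := aux_smooth sY _
  have sV : ContDiff ℝ (⊤ : ℕ∞) (vort ψ) := sXX.add sYY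
  have d0 : Differentiable ℝ ψ := hψ.differentiable (by simp)
  have dX' : Differentiable ℝ (dX ψ) := sX.differentiable (by simp)
  have dY' : Differentiable ℝ (dY ψ) := sY.differentiable (by simp)
  have dV' : Differentiable ℝ (vort ψ) := sV.differentiable (by simp)
  set F : ℝ × ℝ × ℝ → ℝ := fun q => k * ψ (Phi a c s u v q) + (e / 2 * (q.2.1 ^ 2 + q.2.2 ^ 2)
      + α q.1 * q.2.1 - β q.1 * q.2.2 + χ q.1) with hF
  have dF : Differentiable ℝ F := by rw [hF]; fun_prop
  have FX : dX F = fun q => k * (c q.1 * dX ψ (Phi a c s u v q) - s q.1 * dY ψ (Phi a c s u v q))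
      + (e * q.2.1 + α q.1) := by
    funext q
    refine aux_dir (dF q) ?_
    have X := aux_lin q.2.1 1
    have Y := aux_lin q.2.2 0
    have A := aux_time (d := 0) (hα q.1).hasDerivAt
    have B := aux_time (d := 0) (hβ q.1).hasDerivAt
    have C := aux_time (d := 0) (hχ q.1).hasDerivAt
    have h := ((Phi_curve hc hs hu hv d0 q (0, 1, 0) (a := a)).const_mul k).add
      ((((((X.pow 2).add (Y.pow 2)).const_mul (e / 2)).add (A.mul X)).sub (B.mul Y)).add C)
    refine h.congr_deriv ?_
    simp
    ring
  have FY : dY F = fun q => k * (s q.1 * dX ψ (Phi a c s u v q) + c q.1 * dY ψ (Phi a c s u v q))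
      + (e * q.2.2 - β q.1) := by
    funext q
    refine aux_dir (dF q) ?_
    have X := aux_lin q.2.1 0
    have Y := aux_lin q.2.2 1
    have A := aux_time (d := 0) (hα q.1).hasDerivAt
    have B := aux_time (d := 0) (hβ q.1).hasDerivAt
    have C := aux_time (d := 0) (hχ q.1).hasDerivAt
    have h := ((Phi_curve hc hs hu hv d0 q (0, 0, 1) (a := a)).const_mul k).add
      ((((((X.pow 2).add (Y.pow 2)).const_mul (e / 2)).add (A.mul X)).sub (B.mul Y)).add C)
    refine h.congr_deriv ?_
    simp
    ring
  have FXX : ∀ q, dX (dX F) q = k * (c q.1 ^ 2 * dX (dX ψ) (Phi a c s u v q)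
      - 2 * c q.1 * s q.1 * dX (dY ψ) (Phi a c s u v q)
      + s q.1 ^ 2 * dY (dY ψ) (Phi a c s u v q)) + e := by
    intro q
    refine aux_dir (by rw [FX]; fun_prop) ?_
    rw [FX]
    have X := aux_lin q.2.1 1
    have A := aux_time (d := 0) (hα q.1).hasDerivAt
    have Hc := aux_time (d := 0) (hc q.1)
    have Hs := aux_time (d := 0) (hs q.1)
    have h := (((Hc.mul (Phi_curve hc hs hu hv dX' q (0, 1, 0) (a := a))).sub
      (Hs.mul (Phi_curve hc hs hu hv dY' q (0, 1, 0) (a := a)))).const_mul k).add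
      ((X.const_mul e).add A)
    refine h.congr_deriv ?_
    simp only [aux_symm hψ, mul_zero, add_zero, zero_mul]
    ring
  have FYY : ∀ q, dY (dY F) q = k * (s q.1 ^ 2 * dX (dX ψ) (Phi a c s u v q)
      + 2 * c q.1 * s q.1 * dX (dY ψ) (Phi a c s u v q)
      + c q.1 ^ 2 * dY (dY ψ) (Phi a c s u v q)) + e := by
    intro q
    refine aux_dir (by rw [FY]; fun_prop) ?_
    rw [FY]
    have Y := aux_lin q.2.2 1
    have B := aux_time (d := 0) (hβ q.1).hasDerivAt
    have Hc := aux_time (d := 0) (hc q.1)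
    have Hs := aux_time (d := 0) (hs q.1)
    have h := (((Hs.mul (Phi_curve hc hs hu hv dX' q (0, 0, 1) (a := a))).add
      (Hc.mul (Phi_curve hc hs hu hv dY' q (0, 0, 1) (a := a)))).const_mul k).add
      ((Y.const_mul e).sub B)
    refine h.congr_deriv ?_
    simp only [aux_symm hψ, mul_zero, add_zero, zero_mul]
    ring
  have FXY : ∀ q, dX (dY F) q = k * (c q.1 * s q.1 * dX (dX ψ) (Phi a c s u v q)
      + (c q.1 ^ 2 - s q.1 ^ 2) * dX (dY ψ) (Phi a c s u v q)
      - c q.1 * s q.1 * dY (dY ψ) (Phi a c s u v q)) := by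
    intro q
    refine aux_dir (by rw [FY]; fun_prop) ?_
    rw [FY]
    have Y := aux_lin q.2.2 0
    have B := aux_time (d := 0) (hβ q.1).hasDerivAt
    have Hc := aux_time (d := 0) (hc q.1)
    have Hs := aux_time (d := 0) (hs q.1)
    have h := (((Hs.mul (Phi_curve hc hs hu hv dX' q (0, 1, 0) (a := a))).add
      (Hc.mul (Phi_curve hc hs hu hv dY' q (0, 1, 0) (a := a)))).const_mul k).add
      ((Y.const_mul e).sub B)
    refine h.congr_deriv ?_
    simp only [aux_symm hψ, mul_zero, add_zero, zero_mul]
    ring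
  have FV : vort F = fun q => a * vort ψ (Phi a c s u v q) + 2 * e := by
    funext q
    simp only [vort, FXX, FYY, ha, ← hb q.1]
    ring
  have DV : ∀ d, fderiv ℝ (vort F) p d = a * _ := fun d => by
    refine aux_dir (by rw [FV]; fun_prop) ?_
    rw [FV]
    exact ((Phi_curve hc hs hu hv dV' p d (a := a)).const_mul a).add_const (2 * e)
  have hbb := hb p.1
  have N : Wnum F p = a ^ 2 * Wnum ψ (Phi a c s u v p) := by
    have eT : dT (vort F) p = _ := DV (1, 0, 0)
    have eX : dX (vort F) p = _ := DV (0, 1, 0)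
    have eY : dY (vort F) p = _ := DV (0, 0, 1)
    unfold Wnum
    rw [eT, eX, eY, FX, FY]
    simp only [hu', hv']
    generalize dX (vort ψ) (Phi a c s u v p) = zx
    generalize dY (vort ψ) (Phi a c s u v p) = zy
    generalize dT (vort ψ) (Phi a c s u v p) = zt
    generalize dX ψ (Phi a c s u v p) = px
    generalize dY ψ (Phi a c s u v p) = py
    rw [ha, ← hbb]
    ring
  have Dn : Wden F p = a ^ 2 * Wden ψ (Phi a c s u v p) := by
    unfold Wden
    rw [FXX, FYY, FXY]
    generalize dX (dX ψ) (Phi a c s u v p) = zx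
    generalize dX (dY ψ) (Phi a c s u v p) = zy
    generalize dY (dY ψ) (Phi a c s u v p) = zt
    rw [ha, ← hbb]
    ring
  unfold W
  rw [N, Dn, mul_div_mul_left _ _ (pow_ne_zero 2 ha0)]

end

theorem W_is_differential_invariant
    (ψ : ℝ × ℝ × ℝ → ℝ) (hψ : ContDiff ℝ (⊤ : ℕ∞) ψ) :
    -- (a) ψ̃(t,x,y) = e^{−ε} ψ(e^{−ε}t, x, y)
    (∀ ε : ℝ, ∀ p : ℝ × ℝ × ℝ,
      Wden ψ (Real.exp (-ε) * p.1, p.2.1, p.2.2) ≠ 0 →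
      W (fun q => Real.exp (-ε) * ψ (Real.exp (-ε) * q.1, q.2.1, q.2.2)) p
        = W ψ (Real.exp (-ε) * p.1, p.2.1, p.2.2)) ∧
    -- (b) ψ̃(t,x,y) = e^{2ε} ψ(t, e^{−ε}x, e^{−ε}y)
    (∀ ε : ℝ, ∀ p : ℝ × ℝ × ℝ,
      Wden ψ (p.1, Real.exp (-ε) * p.2.1, Real.exp (-ε) * p.2.2) ≠ 0 →
      W (fun q => Real.exp (2 * ε) * ψ (q.1, Real.exp (-ε) * q.2.1, Real.exp (-ε) * q.2.2)) p
        = W ψ (p.1, Real.exp (-ε) * p.2.1, Real.exp (-ε) * p.2.2)) ∧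
    -- (c) rotation through angle θ + εt together with the ε/2 (x²+y²) shift
    (∀ θ ε : ℝ, ∀ p : ℝ × ℝ × ℝ,
      Wden ψ (p.1, p.2.1 * Real.cos (θ + ε * p.1) + p.2.2 * Real.sin (θ + ε * p.1),
              -p.2.1 * Real.sin (θ + ε * p.1) + p.2.2 * Real.cos (θ + ε * p.1)) ≠ 0 →
      W (fun q => ψ (q.1, q.2.1 * Real.cos (θ + ε * q.1) + q.2.2 * Real.sin (θ + ε * q.1),
                     -q.2.1 * Real.sin (θ + ε * q.1) + q.2.2 * Real.cos (θ + ε * q.1))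
          + ε / 2 * (q.2.1 ^ 2 + q.2.2 ^ 2)) p
        = W ψ (p.1, p.2.1 * Real.cos (θ + ε * p.1) + p.2.2 * Real.sin (θ + ε * p.1),
               -p.2.1 * Real.sin (θ + ε * p.1) + p.2.2 * Real.cos (θ + ε * p.1))) ∧
    -- (d) generalized Galilean transformations
    (∀ γ1 γ2 : ℝ → ℝ, ContDiff ℝ (⊤ : ℕ∞) γ1 → ContDiff ℝ (⊤ : ℕ∞) γ2 → ∀ p : ℝ × ℝ × ℝ,
      Wden ψ (p.1, p.2.1 - γ1 p.1, p.2.2 - γ2 p.1) ≠ 0 →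
      W (fun q => ψ (q.1, q.2.1 - γ1 q.1, q.2.2 - γ2 q.1)
          - deriv γ1 q.1 * q.2.2 + deriv γ2 q.1 * q.2.1) p
        = W ψ (p.1, p.2.1 - γ1 p.1, p.2.2 - γ2 p.1)) ∧
    -- (e) shifts of ψ by functions of time
    (∀ χ : ℝ → ℝ, ContDiff ℝ (⊤ : ℕ∞) χ → ∀ p : ℝ × ℝ × ℝ,
      Wden ψ p ≠ 0 →
      W (fun q => ψ q + χ q.1) p = W ψ p) := by
  have z0 : ∀ t : ℝ, HasDerivAt (fun _ : ℝ => (0 : ℝ)) 0 t := fun t => hasDerivAt_const t 0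
  have z1 : Differentiable ℝ (fun _ : ℝ => (0 : ℝ)) := differentiable_const 0
  refine ⟨?_, ?_, ?_, ?_, ?_⟩
  · intro ε p _
    have h := W_general (a := Real.exp (-ε)) (e := 0) (c := fun _ => 1) (s := fun _ => 0)
      (u := fun _ => 0) (v := fun _ => 0) (u' := fun _ => 0) (v' := fun _ => 0)
      (k := Real.exp (-ε)) (b := 1) (α := fun _ => 0) (β := fun _ => 0) (χ := fun _ => 0)
      (fun t => by simpa using hasDerivAt_const t (1 : ℝ))
      (fun t => by simpa using hasDerivAt_const t (0 : ℝ)) z0 z0 hψ z1 z1 z1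
      (by simp) (by simp) (Real.exp_ne_zero _) (by simp) (by simp) p
    simpa [Phi] using h
  · intro ε p _
    have h := W_general (a := 1) (e := 0) (c := fun _ => Real.exp (-ε)) (s := fun _ => 0)
      (u := fun _ => 0) (v := fun _ => 0) (u' := fun _ => 0) (v' := fun _ => 0)
      (k := Real.exp (2 * ε)) (b := Real.exp (-ε) ^ 2)
      (α := fun _ => 0) (β := fun _ => 0) (χ := fun _ => 0)
      (fun t => by simpa using hasDerivAt_const t (Real.exp (-ε)))
      (fun t => by simpa using hasDerivAt_const t (0 : ℝ)) z0 z0 hψ z1 z1 z1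
      (by simp) (by rw [← Real.exp_nat_mul, ← Real.exp_add]; simp) one_ne_zero
      (by simp) (by simp) p
    simpa [Phi] using h
  · intro θ ε p _
    have hl : ∀ t, HasDerivAt (fun t : ℝ => θ + ε * t) ε t := fun t => by
      simpa using ((hasDerivAt_id t).const_mul ε).const_add θ
    have h := W_general (a := 1) (e := ε) (c := fun t => Real.cos (θ + ε * t))
      (s := fun t => Real.sin (θ + ε * t))
      (u := fun _ => 0) (v := fun _ => 0) (u' := fun _ => 0) (v' := fun _ => 0)
      (k := 1) (b := 1) (α := fun _ => 0) (β := fun _ => 0) (χ := fun _ => 0)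
      (fun t => (hl t).cos.congr_deriv (by ring))
      (fun t => (hl t).sin.congr_deriv (by ring)) z0 z0 hψ z1 z1 z1
      (by simp) (by simp) one_ne_zero (by simp) (by simp) p
    simp only [Phi, one_mul, sub_zero, zero_mul, add_zero] at h
    convert h using 3 <;> ring_nf
  · intro γ1 γ2 h1 h2 p _
    have d1 : Differentiable ℝ γ1 := h1.differentiable (by simp)
    have d2 : Differentiable ℝ γ2 := h2.differentiable (by simp)
    have dd : ∀ γ : ℝ → ℝ, ContDiff ℝ (⊤ : ℕ∞) γ → Differentiable ℝ (deriv γ) := fun γ hγ =>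
      (contDiff_infty_iff_deriv.1 hγ).2.differentiable (by simp)
    have h := W_general (a := 1) (e := 0) (c := fun _ => 1) (s := fun _ => 0)
      (u := γ1) (v := γ2) (u' := deriv γ1) (v' := deriv γ2)
      (k := 1) (b := 1) (α := deriv γ2) (β := deriv γ1) (χ := fun _ => 0)
      (fun t => by simpa using hasDerivAt_const t (1 : ℝ))
      (fun t => by simpa using hasDerivAt_const t (0 : ℝ))
      (fun t => (d1 t).hasDerivAt) (fun t => (d2 t).hasDerivAt) hψ (dd _ h2) (dd _ h1) z1
      (by simp) (by simp) one_ne_zero (by simp) (by simp) p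
    simp only [Phi, one_mul, zero_mul, add_zero, neg_zero, zero_add, zero_div] at h
    rw [← h]
    congr 1
    funext q
    ring
  · intro χ hχ p _
    have h := W_general (a := 1) (e := 0) (c := fun _ => 1) (s := fun _ => 0)
      (u := fun _ => 0) (v := fun _ => 0) (u' := fun _ => 0) (v' := fun _ => 0)
      (k := 1) (b := 1) (α := fun _ => 0) (β := fun _ => 0) (χ := χ)
      (fun t => by simpa using hasDerivAt_const t (1 : ℝ))
      (fun t => by simpa using hasDerivAt_const t (0 : ℝ)) z0 z0 hψ z1 z1
      (hχ.differentiable (by simp))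
      (by simp) (by simp) one_ne_zero (by simp) (by simp) p
    simpa [Phi] using h
end
end
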